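/- No transaction DAG can be produced by the ABC protocol in which a pair of confirmed transactions conflict; that is, under the assumption that at all times less than one-third of the total money M is delegated to the adversary, it is impossible that two conflicting transactions are both confirmed. -/

import Mathlib

open scoped Classical

/-- An abstract model of a message DAG produced by the ABC protocol.
Transactions, acks and outputs form the messages of the DAG; every output
carries a value and is delegated to a validator; transactions spend outputs
of previous transactions; acks are issued by validators and sign transactions;
messages reference each other acyclically. -/
structure ABC where
  /-- agents / validators -/
  Val : Type
  /-- transactions of the DAG -/
  Tx : Type
  /-- acks of the DAG -/
  Ack : Type
  /-- transaction outputs -/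
  Out : Type
  [fintypeTx : Fintype Tx]
  [fintypeAck : Fintype Ack]
  [fintypeOut : Fintype Out]
  /-- the total money in the system -/
  M : ℚ
  /-- the value (money amount) of an output -/
  value : Out → ℚ
  value_nonneg : ∀ o, 0 ≤ value o
  /-- the (unique) transaction of which `o` is an output -/
  producer : Out → Tx
  /-- `spends t o` : output `o` is an input of transaction `t` -/
  spends : Tx → Out → Prop
  /-- the validator key indicated in a transaction -/
  txValidator : Tx → Val
  /-- the validator to which an output delegates its stake -/
  delegatedTo : Out → Val
  /-- the genesis transaction -/
  genesis : Tx
  /-- the genesis has no inputs -/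
  genesis_no_inputs : ∀ o, ¬ spends genesis o
  /-- outputs of a non-genesis transaction are delegated to the validator
  indicated in the transaction (genesis outputs list the initial validators) -/
  delegated_eq : ∀ o, producer o ≠ genesis → delegatedTo o = txValidator (producer o)
  /-- the output values of a non-genesis transaction sum to its input values -/
  value_conserved : ∀ t, t ≠ genesis →
    (∑ o : Out, if producer o = t then value o else 0) =
      ∑ o : Out, if spends t o then value o else 0
  /-- the genesis output values sum to the total money `M` -/
  genesis_M : (∑ o : Out, if producer o = genesis then value o else 0) = M
  /-- the validator that issued an ack -/
  ackValidator : Ack → Val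
  /-- the set of transactions an ack signs -/
  ackSigns : Ack → Tx → Prop
  /-- hash references between messages (`Sum.inl` = transaction, `Sum.inr` = ack) -/
  ref : Tx ⊕ Ack → Tx ⊕ Ack → Prop
  /-- a transaction references the transactions producing its inputs -/
  ref_inputs : ∀ t o, spends t o → ref (Sum.inl t) (Sum.inl (producer o))
  /-- an ack references the transactions it signs -/
  ref_signs : ∀ a t, ackSigns a t → ref (Sum.inr a) (Sum.inl t)
  /-- the references form a DAG -/
  ref_acyclic : ∀ m, ¬ Relation.TransGen ref m m
  /-- which agents are honest (the remaining ones form the adversary) -/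
  honest : Val → Prop

attribute [instance] ABC.fintypeTx ABC.fintypeAck ABC.fintypeOut

namespace ABC

variable (P : ABC)

/-- messages: transactions and acks -/
abbrev Msg := P.Tx ⊕ P.Ack

/-- `past m` : the set of messages reachable from `m` by following references -/
def past (m : P.Msg) : Set P.Msg := {m' | Relation.ReflTransGen P.ref m m'}

/-- the past of a set of acks -/
def pastA (A : Finset P.Ack) : Set P.Msg := ⋃ a ∈ A, P.past (Sum.inr a)

/-- output `o` is spent in the message set `S` -/
def SpentIn (S : Set P.Msg) (o : P.Out) : Prop :=
  ∃ t, (Sum.inl t : P.Msg) ∈ S ∧ P.spends t o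

/-- `Depends t' t` : transaction `t'` depends on `t`
(reflexive-transitive closure of spending an output of) -/
def Depends : P.Tx → P.Tx → Prop :=
  Relation.ReflTransGen fun t' t => ∃ o, P.spends t' o ∧ P.producer o = t

/-- two transactions share an input -/
def SharesInput (t t' : P.Tx) : Prop := ∃ o, P.spends t o ∧ P.spends t' o

/-- conflicting transactions: two distinct transactions spending a common output
conflict, and conflicts propagate to all transactions depending on them -/
def Conflict (t₁ t₂ : P.Tx) : Prop :=
  ∃ u₁ u₂, P.Depends t₁ u₁ ∧ P.Depends t₂ u₂ ∧ u₁ ≠ u₂ ∧ P.SharesInput u₁ u₂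

/-- the stake delegated to validator `v` in the message set `S`, computed with
respect to a set `C` of (confirmed) transactions: the total value of outputs
of transactions in `C` delegated to `v` and unspent in `S` -/
noncomputable def stakeWith (C : Set P.Tx) (S : Set P.Msg) (v : P.Val) : ℚ :=
  ∑ o : P.Out,
    if P.producer o ∈ C ∧ P.delegatedTo o = v ∧ ¬ P.SpentIn S o then P.value o else 0

/-- `ConfirmedIn S t` : transaction `t` is confirmed using acks present in the
message set `S`.  The genesis is confirmed from the start; a transaction `t` is
confirmed if the transactions producing its inputs are confirmed and there is a
set of acks `A` (in `S`) whose issuing validators sign `t` and together have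
more than `2/3·M` stake delegated in `past A` (stake being computed from
transactions confirmed in `past A`, which is witnessed by the
under-approximation `C` — by nonnegativity of values this is equivalent to the
exact stake exceeding the threshold), and no other transaction in `past A`
shares an input with `t`. -/
inductive ConfirmedIn : Set P.Msg → P.Tx → Prop
  | genesis (S : Set P.Msg) : ConfirmedIn S P.genesis
  | confirm (S : Set P.Msg) (t : P.Tx) (A : Finset P.Ack) (C : Set P.Tx)
      (hacks : ∀ a ∈ A, (Sum.inr a : P.Msg) ∈ S)
      (hinp : ∀ o, P.spends t o → ConfirmedIn S (P.producer o))
      (hsign : ∀ a ∈ A, P.ackSigns a t)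
      (hC : ∀ u ∈ C, ConfirmedIn (P.pastA A) u)
      (hstake : (2 / 3 : ℚ) * P.M <
        ∑ v ∈ A.image P.ackValidator, P.stakeWith C (P.pastA A) v)
      (hnoconf : ∀ t', (Sum.inl t' : P.Msg) ∈ P.pastA A → t' ≠ t → ¬ P.SharesInput t t') :
      ConfirmedIn S t

/-- a transaction is confirmed (in the full DAG) -/
def Confirmed (t : P.Tx) : Prop := P.ConfirmedIn Set.univ t

/-- the stake delegated to validator `v` in the message set `S`
(Definition "delegated stake" of the paper) -/
noncomputable def stake (S : Set P.Msg) (v : P.Val) : ℚ :=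
  P.stakeWith {u | P.ConfirmedIn S u} S v

/-- `A` is a confirming ack set for `t` (the set `A_t` of the paper) -/
def ConfirmsVia (A : Finset P.Ack) (t : P.Tx) : Prop :=
  (∀ o, P.spends t o → P.Confirmed (P.producer o)) ∧
  (∀ a ∈ A, P.ackSigns a t) ∧
  (∃ C : Set P.Tx, (∀ u ∈ C, P.ConfirmedIn (P.pastA A) u) ∧
    (2 / 3 : ℚ) * P.M < ∑ v ∈ A.image P.ackValidator, P.stakeWith C (P.pastA A) v) ∧
  (∀ t', (Sum.inl t' : P.Msg) ∈ P.pastA A → t' ≠ t → ¬ P.SharesInput t t')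

/-- a view: a set of messages closed under references (an agent processes a
message only after having received its whole past) -/
def IsView (V : Set P.Msg) : Prop := ∀ m ∈ V, ∀ m', P.ref m m' → m' ∈ V

/-- honest validators chain their acks: any two acks of an honest validator
are related by references (each ack references the previous one) -/
def HonestChained : Prop :=
  ∀ a₁ a₂ : P.Ack, P.honest (P.ackValidator a₁) → P.ackValidator a₁ = P.ackValidator a₂ →
    Relation.ReflTransGen P.ref (Sum.inr a₁) (Sum.inr a₂) ∨
      Relation.ReflTransGen P.ref (Sum.inr a₂) (Sum.inr a₁)

/-- an honest validator signs at most one of any pair of conflicting transactions -/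
def HonestNoConflictSign : Prop :=
  ∀ a₁ a₂ t₁ t₂, P.honest (P.ackValidator a₁) → P.ackValidator a₁ = P.ackValidator a₂ →
    P.ackSigns a₁ t₁ → P.ackSigns a₂ t₂ → t₁ ≠ t₂ → ¬ P.Conflict t₁ t₂

/-- an execution order: a total ordering of the messages (given by injective
time stamps) respecting message dependence -/
structure Execution where
  time : P.Msg → ℕ
  inj : Function.Injective time
  respects : ∀ m m', P.ref m m' → time m' < time m

/-- the messages issued up to time `n` in execution `E` -/
def prefixAt (E : P.Execution) (n : ℕ) : Set P.Msg := {m | E.time m ≤ n}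

/-- the value of a transaction: the sum of the values of its outputs -/
noncomputable def txValue (t : P.Tx) : ℚ :=
  ∑ o : P.Out, if P.producer o = t then P.value o else 0

/-- the total value of the inputs of `t` that are outputs delegated to the
adversary (the quantity `m_{t,A}` of the paper) -/
noncomputable def advInputValue (t : P.Tx) : ℚ :=
  ∑ o : P.Out, if P.spends t o ∧ ¬ P.honest (P.delegatedTo o) then P.value o else 0

/-- the paper's adversary-stake accounting, at the set `S` of messages issued
so far: the genesis outputs delegated to the adversary, minus `m_{t,A}` for
every honestly delegated transaction `t` already confirmed, plus
`m_t - m_{t,A}` for every adversary-delegated transaction `t` already issued -/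
noncomputable def advStake (S : Set P.Msg) : ℚ :=
  (∑ o : P.Out,
      if P.producer o = P.genesis ∧ ¬ P.honest (P.delegatedTo o) then P.value o else 0)
    - (∑ t : P.Tx,
        if t ≠ P.genesis ∧ P.honest (P.txValidator t) ∧ P.ConfirmedIn S t
        then P.advInputValue t else 0)
    + ∑ t : P.Tx,
        if t ≠ P.genesis ∧ ¬ P.honest (P.txValidator t) ∧ (Sum.inl t : P.Msg) ∈ S
        then P.txValue t - P.advInputValue t else 0

/-- at any time, less than one-third of the total money is delegated to the
adversary -/
def AdvBounded (E : P.Execution) : Prop :=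
  ∀ n : ℕ, P.advStake (P.prefixAt E n) < P.M / 3

/-- the DAG can be produced by the protocol: honest validators chain their
acks and never sign conflicting transactions, and the adversary's stake stays
below `M/3` throughout some execution producing the DAG -/
def Producible : Prop :=
  P.HonestChained ∧ P.HonestNoConflictSign ∧ ∃ E : P.Execution, P.AdvBounded E

/-- the DAG contains two confirmed conflicting transactions -/
def HasDoubleSpend : Prop :=
  ∃ t₁ t₂, P.Confirmed t₁ ∧ P.Confirmed t₂ ∧ P.Conflict t₁ t₂

/-- the time of the latest ack of the ack set `A` -/
noncomputable def latestAck (E : P.Execution) (A : Finset P.Ack) : ℕ :=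
  A.sup fun a => E.time (Sum.inr a)

/-- `t₀` is the first transaction confirmed during the execution `E`,
exhibited by the confirming ack set `A₀` whose latest ack is minimal -/
def FirstConfirmed (E : P.Execution) (t₀ : P.Tx) (A₀ : Finset P.Ack) : Prop :=
  t₀ ≠ P.genesis ∧ P.ConfirmsVia A₀ t₀ ∧
    ∀ (t : P.Tx) (A : Finset P.Ack), t ≠ P.genesis → P.ConfirmsVia A t →
      P.latestAck E A₀ ≤ P.latestAck E A

/-- a transaction is accepted (by an honest agent) if it is confirmed in some
view -/
def Accepted (t : P.Tx) : Prop := ∃ V, P.IsView V ∧ P.ConfirmedIn V t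

/-- Agreement: a transaction confirmed in the view of some honest agent is
confirmed in the view of any honest agent having received (at least) the same
messages — the acks `A_t` are a transferable proof of confirmation, so every
honest agent will accept the same transaction — and no two conflicting
transactions are ever accepted -/
def Agreement : Prop :=
  (∀ (t : P.Tx) (V V' : Set P.Msg), P.IsView V → P.IsView V' → V ⊆ V' →
      P.ConfirmedIn V t → P.ConfirmedIn V' t) ∧
    ∀ t t', P.Conflict t t' → ¬ (P.Accepted t ∧ P.Accepted t')

/-- Validity: a transaction without any conflicting transaction is accepted by
the honest agents (it is confirmed once all messages are delivered) -/
def Validity : Prop :=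
  ∀ t : P.Tx, (∀ t', t' ≠ t → ¬ P.Conflict t t') → P.Confirmed t

/-- Honest-Termination: if a transaction without any conflicting transaction is
observed by an honest agent, then after receiving further messages the agent
accepts it -/
def HonestTermination : Prop :=
  ∀ t : P.Tx, (∀ t', t' ≠ t → ¬ P.Conflict t t') →
    ∀ V, P.IsView V → (Sum.inl t : P.Msg) ∈ V →
      ∃ V', P.IsView V' ∧ V ⊆ V' ∧ P.ConfirmedIn V' t

/-- every honest validator signs every transaction that has no conflicting
alternative -/
def HonestRespond : Prop :=
  ∀ t : P.Tx, (∀ t', t' ≠ t → ¬ P.Conflict t t') →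
    ∀ v, P.honest v → ∃ a, P.ackValidator a = v ∧ P.ackSigns a t

end ABC

/-!
Two certificates (ack sets `A_t`), one of which has the other's transaction in its past, cannot
confirm transactions sharing an input. So it suffices that any two certificates are comparable in
this sense, which is shown by induction on the time of their latest acks; if these coincide, the
latest ack signs both transactions.

For the induction step, a certificate is backed by the certificates, in its own past, of the
transactions delegating stake to its signers, and induction along this relation allows these to be
assumed comparable with the other certificate. If the two certificates were incomparable, then both
would have seen all backing transactions. The stakes counted by the two certificates are then
unspent outputs of one conflict-free set of transactions, worth at most `M` in total, and each
exceeds `2M / 3`. They overlap in more than `M / 3`, which is more than the adversary's stake, so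
the two certificates share an honest signer, whose chained acks make them comparable after all.
-/

namespace ABC

variable {P : ABC} {A A' : Finset P.Ack} {C F : Set P.Tx} {S S' V : Set P.Msg} {t t' : P.Tx}
  {o : P.Out} {n : ℕ}

/-! ### Messages, views and time -/

/-- The transactions of the message set `S`. The genesis always belongs to it, just as `ConfirmedIn`
confirms the genesis in every message set. -/
def issued (P : ABC) (S : Set P.Msg) : Set P.Tx := insert P.genesis (Sum.inl ⁻¹' S)

lemma issued_mono (h : S ⊆ S') : P.issued S ⊆ P.issued S' :=
  Set.insert_subset_insert (Set.preimage_mono h)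

lemma ne_genesis_of_spends (h : P.spends t o) : t ≠ P.genesis := by
  rintro rfl
  exact P.genesis_no_inputs o h

lemma spentIn_of_spends_of_mem_issued (ht : t ∈ P.issued S) (ho : P.spends t o) :
    P.SpentIn S o :=
  ⟨t, ht.resolve_left (ne_genesis_of_spends ho), ho⟩

lemma mem_pastA {m : P.Msg} :
    m ∈ P.pastA A ↔ ∃ a ∈ A, Relation.ReflTransGen P.ref (Sum.inr a) m := by
  simp [pastA, past]

lemma isView_pastA (A : Finset P.Ack) : P.IsView (P.pastA A) := by
  intro m hm m' hmm'
  obtain ⟨a, ha, ham⟩ := mem_pastA.1 hm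
  exact mem_pastA.2 ⟨a, ha, ham.tail hmm'⟩

lemma mem_pastA_of_mem {a : P.Ack} (ha : a ∈ A) : Sum.inr a ∈ P.pastA A :=
  mem_pastA.2 ⟨a, ha, .refl⟩

lemma IsView.pastA_subset (hV : P.IsView V) (hA : ∀ a ∈ A, Sum.inr a ∈ V) : P.pastA A ⊆ V := by
  intro m hm
  obtain ⟨a, ha, ham⟩ := mem_pastA.1 hm
  induction ham with
  | refl => exact hA a ha
  | tail ham hmm' ih => exact hV _ (ih (mem_pastA.2 ⟨a, ha, ham⟩)) _ hmm'

lemma isView_prefixAt (E : P.Execution) (n : ℕ) : P.IsView (P.prefixAt E n) :=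
  fun m hm m' hmm' => (E.respects m m' hmm').le.trans hm

lemma pastA_subset_prefixAt_latestAck (E : P.Execution) (A : Finset P.Ack) :
    P.pastA A ⊆ P.prefixAt E (P.latestAck E A) :=
  (isView_prefixAt E _).pastA_subset fun _ ha =>
    Finset.le_sup (f := fun a => E.time (Sum.inr a)) ha

lemma latestAck_le_of_forall_mem_pastA (E : P.Execution)
    (h : ∀ a ∈ A, Sum.inr a ∈ P.pastA A') : P.latestAck E A ≤ P.latestAck E A' :=
  Finset.sup_le fun a ha => pastA_subset_prefixAt_latestAck E A' (h a ha)

lemma Execution.time_lt_latestAck (E : P.Execution) (h : Sum.inl t ∈ P.pastA A) :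
    E.time (Sum.inl t) < P.latestAck E A := by
  obtain ⟨a, ha, hat⟩ := mem_pastA.1 h
  obtain h | ⟨m, hm, hmt⟩ := hat.cases_tail
  · cases h
  · exact (E.respects m _ hmt).trans_le
      (pastA_subset_prefixAt_latestAck E A (mem_pastA.2 ⟨a, ha, hm⟩))

/-! ### Money flow -/

/-- The transactions producing the inputs of members of `F` belong to `F`. -/
def InputClosed (F : Set P.Tx) : Prop := ∀ t ∈ F, ∀ o, P.spends t o → P.producer o ∈ F

lemma InputClosed.union {F F' : Set P.Tx} (h : InputClosed F) (h' : InputClosed F') :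
    InputClosed (F ∪ F') := by
  rintro t (ht | ht) o ho
  · exact .inl (h t ht o ho)
  · exact .inr (h' t ht o ho)

/-- No output is spent twice within `F`. -/
def ConflictFree (F : Set P.Tx) : Prop := F.Pairwise fun t u => ¬ P.SharesInput t u

/-- The outputs of transactions in `C` that are unspent in the message set `S`. -/
noncomputable def unspent (C : Set P.Tx) (S : Set P.Msg) : Finset P.Out :=
  {o | P.producer o ∈ C ∧ ¬ P.SpentIn S o}

@[simp]
lemma mem_unspent : o ∈ unspent C S ↔ P.producer o ∈ C ∧ ¬ P.SpentIn S o := by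
  simp [unspent]

/-- The outputs of transactions in `F` that no transaction in `F` spends. -/
noncomputable def utxo (F : Set P.Tx) : Finset P.Out := unspent F (Sum.inl '' F)

lemma mem_utxo : o ∈ utxo F ↔ P.producer o ∈ F ∧ ∀ t ∈ F, ¬ P.spends t o := by
  simp [utxo, SpentIn]

lemma unspent_subset_utxo (hCF : C ⊆ F) (hFS : F ⊆ P.issued S) : unspent C S ⊆ utxo F := by
  intro o ho
  rw [mem_unspent] at ho
  exact mem_utxo.2
    ⟨hCF ho.1, fun t ht hto => ho.2 (spentIn_of_spends_of_mem_issued (hFS ht) hto)⟩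

lemma sum_utxo {β : Type*} [AddCommGroup β] (f : P.Out → β) (hin : InputClosed F)
    (hF : ConflictFree F) :
    ∑ o ∈ utxo F, f o =
      ∑ t ∈ F.toFinset, (∑ o with P.producer o = t, f o - ∑ o with P.spends t o, f o) := by
  let produced := F.toFinset.biUnion fun t => {o | P.producer o = t}
  let spent := F.toFinset.biUnion fun t => {o | P.spends t o}
  have hspent : spent ⊆ produced := by
    intro o ho
    obtain ⟨t, ht, hto⟩ : ∃ t ∈ F, P.spends t o := by simpa [spent] using ho
    simpa [produced] using hin t ht o hto
  have hutxo : utxo F = produced \ spent := by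
    ext o
    simp [mem_utxo, produced, spent]
  have hproduced_sum : ∑ o ∈ produced, f o =
      ∑ t ∈ F.toFinset, ∑ o with P.producer o = t, f o := by
    refine Finset.sum_biUnion fun t _ t' _ hne => Finset.disjoint_filter.2 ?_
    rintro o - rfl
    exact hne
  have hspent_sum : ∑ o ∈ spent, f o = ∑ t ∈ F.toFinset, ∑ o with P.spends t o, f o :=
    Finset.sum_biUnion fun t ht t' ht' hne => Finset.disjoint_filter.2 fun o _ ho ho' =>
      hF (Set.mem_toFinset.1 ht) (Set.mem_toFinset.1 ht') hne ⟨o, ho, ho'⟩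
  rw [hutxo, Finset.sum_sdiff_eq_sub hspent, hproduced_sum, hspent_sum, Finset.sum_sub_distrib]

lemma M_nonneg (P : ABC) : 0 ≤ P.M := by
  rw [← P.genesis_M, ← Finset.sum_filter]
  exact Finset.sum_nonneg fun o _ => P.value_nonneg o

lemma sum_value_utxo_le (hin : InputClosed F) (hF : ConflictFree F) :
    ∑ o ∈ utxo F, P.value o ≤ P.M := by
  have hnet (t : P.Tx) : ∑ o with P.producer o = t, P.value o - ∑ o with P.spends t o, P.value o =
      if t = P.genesis then P.M else 0 := by
    simp only [Finset.sum_filter]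
    split_ifs with ht
    · subst ht
      simp [P.genesis_M, P.genesis_no_inputs]
    · rw [P.value_conserved t ht, sub_self]
  simp only [sum_utxo P.value hin hF, hnet, Finset.sum_ite_eq']
  split_ifs
  · exact le_rfl
  · exact P.M_nonneg

/-! ### Delegated stake -/

lemma stakeWith_eq_sum_unspent (C : Set P.Tx) (S : Set P.Msg) (v : P.Val) :
    P.stakeWith C S v = ∑ o ∈ unspent C S with P.delegatedTo o = v, P.value o := by
  rw [stakeWith, ← Finset.sum_filter]
  congr 1
  ext o
  simp only [Finset.mem_filter, Finset.mem_univ, true_and, mem_unspent]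
  tauto

lemma stakeWith_mono {C C' : Set P.Tx} (h : C ⊆ C') (S : Set P.Msg) (v : P.Val) :
    P.stakeWith C S v ≤ P.stakeWith C' S v := by
  simp only [stakeWith_eq_sum_unspent]
  refine Finset.sum_le_sum_of_subset_of_nonneg (Finset.filter_subset_filter _ fun o ho => ?_)
    fun o _ _ => P.value_nonneg o
  rw [mem_unspent] at ho ⊢
  exact ⟨h ho.1, ho.2⟩

lemma sum_stakeWith (W : Finset P.Val) (C : Set P.Tx) (S : Set P.Msg) :
    ∑ v ∈ W, P.stakeWith C S v =
      ∑ o ∈ unspent C S with P.delegatedTo o ∈ W, P.value o := by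
  simp only [stakeWith_eq_sum_unspent]
  exact Finset.sum_fiberwise_eq_sum_filter _ _ _ _

/-- The value an output contributes to the adversary's stake. -/
noncomputable def advValue (P : ABC) (o : P.Out) : ℚ :=
  if P.honest (P.delegatedTo o) then 0 else P.value o

lemma advValue_nonneg (o : P.Out) : 0 ≤ P.advValue o := by
  unfold advValue
  split_ifs
  exacts [le_rfl, P.value_nonneg o]

lemma advValue_le_value (o : P.Out) : P.advValue o ≤ P.value o := by
  unfold advValue
  split_ifs
  exacts [P.value_nonneg o, le_rfl]

/-- The change `t` makes to the adversary's stake, by the outputs it produces and the ones it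
spends. -/
noncomputable def advGain (P : ABC) (t : P.Tx) : ℚ :=
  ∑ o with P.producer o = t, P.advValue o - ∑ o with P.spends t o, P.advValue o

lemma advInputValue_eq_sum (t : P.Tx) :
    P.advInputValue t = ∑ o with P.spends t o, P.advValue o := by
  simp [advInputValue, advValue, Finset.sum_filter, ite_and]

lemma advGain_genesis : P.advGain P.genesis =
    ∑ o, if P.producer o = P.genesis ∧ ¬ P.honest (P.delegatedTo o) then P.value o else 0 := by
  simp [advGain, advValue, Finset.sum_filter, P.genesis_no_inputs, ite_and]

lemma advGain_of_honest (ht : t ≠ P.genesis) (hv : P.honest (P.txValidator t)) :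
    P.advGain t = -P.advInputValue t := by
  have hout : ∑ o with P.producer o = t, P.advValue o = 0 :=
    Finset.sum_eq_zero fun o ho => by
      obtain rfl : P.producer o = t := by simpa using ho
      simp [advValue, P.delegated_eq o ht, hv]
  rw [advGain, hout, zero_sub, advInputValue_eq_sum]

lemma advGain_of_not_honest (ht : t ≠ P.genesis) (hv : ¬ P.honest (P.txValidator t)) :
    P.advGain t = P.txValue t - P.advInputValue t := by
  have hout : ∑ o with P.producer o = t, P.advValue o = P.txValue t := by
    rw [txValue, ← Finset.sum_filter]
    refine Finset.sum_congr rfl fun o ho => ?_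
    obtain rfl : P.producer o = t := by simpa using ho
    simp [advValue, P.delegated_eq o ht, hv]
  rw [advGain, hout, advInputValue_eq_sum]

lemma advGain_nonpos (ht : t ≠ P.genesis) (hv : P.honest (P.txValidator t)) :
    P.advGain t ≤ 0 := by
  rw [advGain_of_honest ht hv, neg_nonpos, advInputValue_eq_sum]
  exact Finset.sum_nonneg fun o _ => advValue_nonneg o

lemma advGain_nonneg (ht : t ≠ P.genesis) (hv : ¬ P.honest (P.txValidator t)) :
    0 ≤ P.advGain t := by
  rw [advGain_of_not_honest ht hv, sub_nonneg, txValue, P.value_conserved t ht,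
    ← Finset.sum_filter, advInputValue_eq_sum]
  exact Finset.sum_le_sum fun o _ => advValue_le_value o

/-- The transactions accounted for in `advStake S`: besides the genesis, the honestly delegated
ones once confirmed and the adversarially delegated ones once issued. -/
def advAccounted (P : ABC) (S : Set P.Msg) : Set P.Tx :=
  {t | t = P.genesis ∨ if P.honest (P.txValidator t) then P.ConfirmedIn S t else Sum.inl t ∈ S}

lemma advStake_eq_sum_advGain (S : Set P.Msg) :
    P.advStake S = ∑ t ∈ (P.advAccounted S).toFinset, P.advGain t := by
  have hgenesis : P.advGain P.genesis =
      ∑ t, if t = P.genesis then P.advGain P.genesis else 0 := by simp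
  have haccounted : (P.advAccounted S).toFinset = ({t | t ∈ P.advAccounted S} : Finset P.Tx) := by
    ext; simp
  rw [advStake, ← advGain_genesis, hgenesis, ← Finset.sum_sub_distrib, ← Finset.sum_add_distrib,
    haccounted, Finset.sum_filter]
  refine Finset.sum_congr rfl fun t _ => ?_
  by_cases ht : t = P.genesis
  · subst ht
    simp [advAccounted]
  · by_cases hv : P.honest (P.txValidator t)
    · by_cases hconf : P.ConfirmedIn S t <;>
        simp [advAccounted, ht, hv, hconf, advGain_of_honest ht hv]
    · simp [advAccounted, ht, hv, advGain_of_not_honest ht hv]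

/-- Honest transactions never increase and adversarial ones never decrease the adversary's stake,
so accounting for the former late and for the latter early can only overestimate it. -/
lemma sum_advValue_utxo_le_advStake (hin : InputClosed F) (hF : ConflictFree F)
    (hconf : ∀ t, P.ConfirmedIn S t → t ∈ F) (hFS : F ⊆ P.issued S) :
    ∑ o ∈ utxo F, P.advValue o ≤ P.advStake S := by
  rw [sum_utxo P.advValue hin hF, advStake_eq_sum_advGain]
  change ∑ t ∈ F.toFinset, P.advGain t ≤ _
  rw [← Finset.sum_sdiff_le_sum_sdiff]
  trans 0
  · refine Finset.sum_nonpos fun t ht => ?_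
    have ⟨htF, htS⟩ : t ∈ F ∧ t ∉ P.advAccounted S := by simpa using ht
    simp only [advAccounted, Set.mem_ofPred_eq, not_or] at htS
    obtain ⟨hgen, htS⟩ := htS
    refine advGain_nonpos hgen ?_
    by_contra hv
    exact htS (by simpa [hv] using (hFS htF).resolve_left hgen)
  · refine Finset.sum_nonneg fun t ht => ?_
    have ⟨htS, htF⟩ : t ∈ P.advAccounted S ∧ t ∉ F := by simpa using ht
    have hgen : t ≠ P.genesis := by
      rintro rfl
      exact htF (hconf _ (.genesis S))
    refine advGain_nonneg hgen fun hv => htF (hconf t ?_)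
    simpa [advAccounted, hgen, hv] using htS

/-- Quorum intersection: within a conflict-free set of transactions there is at most `M` to stake,
so two quorums share more than `M / 3`, which is more than the adversary has. -/
lemma exists_honest_mem_inter {C₁ C₂ : Set P.Tx} {S₁ S₂ : Set P.Msg} {W₁ W₂ : Finset P.Val}
    (hin : InputClosed (C₁ ∪ C₂)) (hC : ConflictFree (C₁ ∪ C₂))
    (hS₁ : C₁ ∪ C₂ ⊆ P.issued S₁) (hS₂ : C₁ ∪ C₂ ⊆ P.issued S₂)
    (hW₁ : 2 / 3 * P.M < ∑ v ∈ W₁, P.stakeWith C₁ S₁ v)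
    (hW₂ : 2 / 3 * P.M < ∑ v ∈ W₂, P.stakeWith C₂ S₂ v)
    (hadv : ∑ o ∈ unspent C₁ S₁, P.advValue o < P.M / 3) :
    ∃ v ∈ W₁ ∩ W₂, P.honest v := by
  by_contra! hdisj
  rw [sum_stakeWith] at hW₁ hW₂
  set O₁ : Finset P.Out := {o ∈ unspent C₁ S₁ | P.delegatedTo o ∈ W₁}
  set O₂ : Finset P.Out := {o ∈ unspent C₂ S₂ | P.delegatedTo o ∈ W₂}
  have hunion : ∑ o ∈ O₁ ∪ O₂, P.value o ≤ P.M := by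
    refine (Finset.sum_le_sum_of_subset_of_nonneg (Finset.union_subset ?_ ?_)
      fun o _ _ => P.value_nonneg o).trans (sum_value_utxo_le hin hC)
    · exact (Finset.filter_subset _ _).trans (unspent_subset_utxo Set.subset_union_left hS₁)
    · exact (Finset.filter_subset _ _).trans (unspent_subset_utxo Set.subset_union_right hS₂)
  have hinter : ∑ o ∈ O₁ ∩ O₂, P.value o ≤ ∑ o ∈ unspent C₁ S₁, P.advValue o := by
    calc ∑ o ∈ O₁ ∩ O₂, P.value o
        = ∑ o ∈ O₁ ∩ O₂, P.advValue o := Finset.sum_congr rfl fun o ho => by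
          obtain ⟨ho₁, ho₂⟩ := Finset.mem_inter.1 ho
          have hv := hdisj _ (Finset.mem_inter.2
            ⟨(Finset.mem_filter.1 ho₁).2, (Finset.mem_filter.1 ho₂).2⟩)
          simp [advValue, hv]
      _ ≤ ∑ o ∈ unspent C₁ S₁, P.advValue o :=
          Finset.sum_le_sum_of_subset_of_nonneg
            (Finset.inter_subset_left.trans (Finset.filter_subset _ _))
            fun o _ _ => advValue_nonneg o
  have hsum := Finset.sum_union_inter (s₁ := O₁) (s₂ := O₂) (f := P.value)
  linarith

/-! ### Certificates -/

lemma ConfirmedIn.mono (hSS' : S ⊆ S') (h : P.ConfirmedIn S t) : P.ConfirmedIn S' t := by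
  induction h with
  | genesis => exact .genesis S'
  | confirm S t A C hacks _ hsign hC hstake hnoconf ihinp _ =>
    exact .confirm S' t A C (fun a ha => hSS' (hacks a ha)) (fun o ho => ihinp o ho hSS')
      hsign hC hstake hnoconf

lemma ConfirmedIn.producer (h : P.ConfirmedIn S t) (ho : P.spends t o) :
    P.ConfirmedIn S (P.producer o) := by
  cases h with
  | genesis => exact absurd ho (P.genesis_no_inputs o)
  | confirm _ _ _ _ _ hinp => exact hinp o ho

lemma inputClosed_confirmedIn (S : Set P.Msg) : InputClosed {t | P.ConfirmedIn S t} :=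
  fun _ ht _ ho => ht.producer ho

lemma ConfirmedIn.of_depends (h : P.ConfirmedIn S t) (ht : P.Depends t t') :
    P.ConfirmedIn S t' := by
  induction ht with
  | refl => exact h
  | tail _ hspend ih =>
    obtain ⟨o, ho, rfl⟩ := hspend
    exact ih.producer ho

lemma inputClosed_depends (C : Set P.Tx) : InputClosed {t' | ∃ t ∈ C, P.Depends t t'} := by
  rintro t' ⟨t, ht, htt'⟩ o ho
  exact ⟨t, ht, htt'.tail ⟨o, ho, rfl⟩⟩

lemma ConfirmsVia.nonempty (h : P.ConfirmsVia A t) : A.Nonempty := by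
  obtain ⟨-, -, ⟨C, -, hstake⟩, -⟩ := h
  rw [Finset.nonempty_iff_ne_empty]
  rintro rfl
  have := P.M_nonneg
  simp only [Finset.image_empty, Finset.sum_empty] at hstake
  linarith

lemma ConfirmsVia.mem_issued (h : P.ConfirmsVia A t) (hV : P.IsView V) {a : P.Ack} (ha : a ∈ A)
    (haV : Sum.inr a ∈ V) : t ∈ P.issued V :=
  .inr (hV _ haV _ (P.ref_signs a t (h.2.1 a ha)))

lemma ConfirmsVia.not_sharesInput (h : P.ConfirmsVia A t) (ht' : t' ∈ P.issued (P.pastA A))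
    (hne : t' ≠ t) : ¬ P.SharesInput t t' := by
  rintro ⟨o, ho, ho'⟩
  exact h.2.2.2 t' (ht'.resolve_left (ne_genesis_of_spends ho')) hne ⟨o, ho, ho'⟩

/-- `t` is confirmed by acks of `S` that form a certificate satisfying `Q`; as in `ConfirmedIn`, the
genesis needs no certificate. -/
def CertifiedIn (Q : Finset P.Ack → P.Tx → Prop) (S : Set P.Msg) (t : P.Tx) : Prop :=
  t = P.genesis ∨ ∃ A, (∀ a ∈ A, Sum.inr a ∈ S) ∧ P.ConfirmsVia A t ∧ Q A t

lemma CertifiedIn.imp {Q Q' : Finset P.Ack → P.Tx → Prop} (h : CertifiedIn Q S t)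
    (hQ : ∀ A, (∀ a ∈ A, Sum.inr a ∈ S) → P.ConfirmsVia A t → Q A t → Q' A t) :
    CertifiedIn Q' S t :=
  h.imp_right fun ⟨A, hA, hconf, hAt⟩ => ⟨A, hA, hconf, hQ A hA hconf hAt⟩

lemma CertifiedIn.mem_issued {Q : Finset P.Ack → P.Tx → Prop} (h : CertifiedIn Q V t)
    (hV : P.IsView V) : t ∈ P.issued V := by
  obtain rfl | ⟨A, hA, hconf, -⟩ := h
  · exact Set.mem_insert _ _
  · obtain ⟨a, ha⟩ := hconf.nonempty
    exact hconf.mem_issued hV ha (hA a ha)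

/-- The acks `A` have more than two thirds of the money staked on them by outputs of `C`, where `C`
contains the producers of its inputs and consists of transactions certified in the past of `A` by
certificates satisfying `Q`. -/
structure Backs (Q : Finset P.Ack → P.Tx → Prop) (A : Finset P.Ack) (C : Set P.Tx) : Prop where
  inputClosed : InputClosed C
  stake_gt : 2 / 3 * P.M < ∑ v ∈ A.image P.ackValidator, P.stakeWith C (P.pastA A) v
  certified : ∀ t ∈ C, CertifiedIn Q (P.pastA A) t

lemma Backs.imp {Q Q' : Finset P.Ack → P.Tx → Prop} (h : Backs Q A C)
    (hQ : ∀ B u, (∀ b ∈ B, Sum.inr b ∈ P.pastA A) → P.ConfirmsVia B u → Q B u → Q' B u) :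
    Backs Q' A C :=
  ⟨h.inputClosed, h.stake_gt, fun t ht => (h.certified t ht).imp fun B => hQ B t⟩

lemma Backs.of_subset {Q : Finset P.Ack → P.Tx → Prop} {C C' : Set P.Tx} (hCC' : C ⊆ C')
    (hin : InputClosed C') (hcert : ∀ t ∈ C', CertifiedIn Q (P.pastA A) t)
    (hstake : 2 / 3 * P.M < ∑ v ∈ A.image P.ackValidator, P.stakeWith C (P.pastA A) v) :
    Backs Q A C' :=
  ⟨hin, hstake.trans_le (Finset.sum_le_sum fun v _ => stakeWith_mono hCC' _ v), hcert⟩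

section Induction

variable {Q : Finset P.Ack → P.Tx → Prop}
  (step : ∀ A C t, P.ConfirmsVia A t → Backs Q A C → Q A t)

include step

lemma ConfirmedIn.certifiedIn_of_backs (h : P.ConfirmedIn S t) : CertifiedIn Q S t := by
  -- Ancestors are carried along because `Backs` needs a set closed under taking inputs.
  suffices hdep : ∀ t', P.Depends t t' → CertifiedIn Q S t' from hdep t .refl
  induction h with
  | genesis S =>
    intro t' ht'
    obtain rfl | ⟨_, ⟨o, ho, -⟩, -⟩ := ht'.cases_head
    · exact .inl rfl
    · exact absurd ho (P.genesis_no_inputs o)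
  | confirm S t A C hacks hinp hsign hC hstake hnoconf ihinp ihC =>
    intro t' ht'
    obtain rfl | ⟨_, ⟨o, ho, rfl⟩, hdep⟩ := ht'.cases_head
    · have hA : P.ConfirmsVia A t :=
        ⟨fun o ho => (hinp o ho).mono (Set.subset_univ S), hsign, ⟨C, hC, hstake⟩, hnoconf⟩
      have hC_subset : C ⊆ {u' | ∃ u ∈ C, P.Depends u u'} := fun u hu => ⟨u, hu, .refl⟩
      have hbacks : Backs Q A {u' | ∃ u ∈ C, P.Depends u u'} :=
        .of_subset hC_subset (inputClosed_depends C)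
          (fun u' ⟨u, hu, huu'⟩ => ihC u hu u' huu') hstake
      exact .inr ⟨A, hacks, hA, step A _ t hA hbacks⟩
    · exact ihinp o ho t' hdep

lemma ConfirmsVia.induction (h : P.ConfirmsVia A t) : Q A t := by
  have ⟨_, _, ⟨C, hC, hstake⟩, _⟩ := h
  exact step A _ t h (.of_subset hC (inputClosed_confirmedIn _)
    (fun _ hu => hu.certifiedIn_of_backs step) hstake)

end Induction

lemma ConfirmedIn.certifiedIn (h : P.ConfirmedIn S t) : CertifiedIn (fun _ _ => True) S t :=
  h.certifiedIn_of_backs fun _ _ _ _ _ => trivial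

/-! ### Comparability of certificates -/

/-- Of the certificates `A` of `t` and `A'` of `t'`, one has seen the transaction of the other. -/
def Comparable (A : Finset P.Ack) (t : P.Tx) (A' : Finset P.Ack) (t' : P.Tx) : Prop :=
  t ∈ P.issued (P.pastA A') ∨ t' ∈ P.issued (P.pastA A)

lemma Comparable.symm (h : Comparable A t A' t') : Comparable A' t' A t := Or.symm h

lemma ConfirmsVia.not_sharesInput_of_comparable (h : P.ConfirmsVia A t) (h' : P.ConfirmsVia A' t')
    (hcomp : Comparable A t A' t') (hne : t ≠ t') : ¬ P.SharesInput t t' := by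
  rintro ⟨o, ho, ho'⟩
  obtain hseen | hseen := hcomp
  · exact h'.not_sharesInput hseen hne ⟨o, ho', ho⟩
  · exact h.not_sharesInput hseen hne.symm ⟨o, ho, ho'⟩

lemma conflictFree_of_certifiedIn {Q : Finset P.Ack → P.Tx → Prop}
    (hF : ∀ t ∈ F, ∃ S, CertifiedIn Q S t)
    (hQ : ∀ A t A' t', P.ConfirmsVia A t → P.ConfirmsVia A' t' → Q A t → Q A' t' →
      Comparable A t A' t') :
    ConflictFree F := by
  rintro t ht t' ht' hne ⟨o, ho, ho'⟩
  obtain ⟨S, hS⟩ := hF t ht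
  obtain ⟨S', hS'⟩ := hF t' ht'
  obtain ⟨A, -, hA, hQA⟩ := hS.resolve_left (ne_genesis_of_spends ho)
  obtain ⟨A', -, hA', hQA'⟩ := hS'.resolve_left (ne_genesis_of_spends ho')
  exact hA.not_sharesInput_of_comparable hA' (hQ A t A' t' hA hA' hQA hQA') hne ⟨o, ho, ho'⟩

lemma ConfirmsVia.comparable_of_latestAck_eq (E : P.Execution) (h : P.ConfirmsVia A t)
    (h' : P.ConfirmsVia A' t') (heq : P.latestAck E A = P.latestAck E A') :
    Comparable A t A' t' := by
  obtain ⟨a, ha, hat⟩ :=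
    Finset.exists_mem_eq_sup A h.nonempty fun a => E.time (Sum.inr a)
  obtain ⟨a', ha', hat'⟩ :=
    Finset.exists_mem_eq_sup A' h'.nonempty fun a => E.time (Sum.inr a)
  obtain rfl : a = a' := Sum.inr_injective (E.inj (hat.symm.trans (heq.trans hat')))
  exact .inl (h.mem_issued (isView_pastA A') ha (mem_pastA_of_mem ha'))

lemma ConfirmsVia.comparable_of_honest_signer (hchain : P.HonestChained) (h : P.ConfirmsVia A t)
    (h' : P.ConfirmsVia A' t')
    (hv : ∃ v ∈ A.image P.ackValidator ∩ A'.image P.ackValidator, P.honest v) :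
    Comparable A t A' t' := by
  obtain ⟨v, hv, hhonest⟩ := hv
  obtain ⟨hvA, hvA'⟩ := Finset.mem_inter.1 hv
  obtain ⟨a, ha, rfl⟩ := Finset.mem_image.1 hvA
  obtain ⟨a', ha', haa'⟩ := Finset.mem_image.1 hvA'
  obtain hreach | hreach := hchain a a' hhonest haa'.symm
  · exact .inr (h'.mem_issued (isView_pastA A) ha' (mem_pastA.2 ⟨a, ha, hreach⟩))
  · exact .inl (h.mem_issued (isView_pastA A') ha (mem_pastA.2 ⟨a', ha', hreach⟩))

lemma CertifiedIn.mem_issued_of_comparable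
    (h : CertifiedIn (fun B u => Comparable B u A' t') (P.pastA A) t)
    (hunseen : t' ∉ P.issued (P.pastA A)) : t ∈ P.issued (P.pastA A') := by
  obtain rfl | ⟨B, hB, -, hseen | hseen⟩ := h
  · exact Set.mem_insert _ _
  · exact hseen
  · exact absurd (issued_mono ((isView_pastA A).pastA_subset hB) hseen) hunseen

/-- The certificate `A` of `t` is comparable with every certificate completed before time `n`. -/
def ComparableBefore (E : P.Execution) (n : ℕ) (A : Finset P.Ack) (t : P.Tx) : Prop :=
  ∀ B u, P.ConfirmsVia B u → P.latestAck E B < n → Comparable A t B u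

/-- All certificates completed before time `n` are comparable. -/
def PairwiseComparableBefore (E : P.Execution) (n : ℕ) : Prop :=
  ∀ A t, P.ConfirmsVia A t → P.latestAck E A < n → ComparableBefore E n A t

/-- The witness is the time at which the last transaction of `C` is issued: later, the adversary
may have moved its stake by transactions outside the past of `A`. -/
lemma exists_prefixAt_between {Q : Finset P.Ack → P.Tx → Prop} {E : P.Execution}
    (hn : PairwiseComparableBefore E n) (hA : P.latestAck E A < n)
    (hC : ∀ t ∈ C, CertifiedIn Q (P.pastA A) t) :
    ∃ m < n, C ⊆ P.issued (P.prefixAt E m) ∧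
      ∀ t, P.ConfirmedIn (P.prefixAt E m) t → t ∈ P.issued (P.pastA A) := by
  let T : Finset P.Tx := {t | t ∈ C ∧ t ≠ P.genesis}
  let m := T.sup fun t => E.time (Sum.inl t)
  have hT {t : P.Tx} : t ∈ T ↔ t ∈ C ∧ t ≠ P.genesis := by simp [T]
  have hm : m ≤ P.latestAck E A := Finset.sup_le fun t ht =>
    (E.time_lt_latestAck (((hC t (hT.1 ht).1).mem_issued (isView_pastA A)).resolve_left
      (hT.1 ht).2)).le
  refine ⟨m, hm.trans_lt hA, fun t ht => or_iff_not_imp_left.2 fun hgen =>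
    Finset.le_sup (f := fun t => E.time (Sum.inl t)) (hT.2 ⟨ht, hgen⟩), fun t ht => ?_⟩
  obtain rfl | ⟨B, hB, htB, -⟩ := ht.certifiedIn
  · exact Set.mem_insert _ _
  have hBm : P.latestAck E B ≤ m := Finset.sup_le hB
  by_cases hgen : t = P.genesis
  · exact .inl hgen
  have hpos : 0 < P.latestAck E B := by
    obtain ⟨b, hb⟩ := htB.nonempty
    exact (Nat.zero_le _).trans_lt (E.time_lt_latestAck
      ((htB.mem_issued (isView_pastA B) hb (mem_pastA_of_mem hb)).resolve_left hgen))
  obtain ⟨s, hs, hBs⟩ := (Finset.le_sup_iff hpos).1 hBm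
  obtain ⟨hsC, hsgen⟩ := hT.1 hs
  obtain ⟨B', hB', hsB', -⟩ := (hC s hsC).resolve_left hsgen
  have hB'n := (latestAck_le_of_forall_mem_pastA E hB').trans_lt hA
  obtain hseen | hseen := hn B t htB (hBm.trans_lt (hm.trans_lt hA)) B' s hsB' hB'n
  · exact issued_mono ((isView_pastA A).pastA_subset hB') hseen
  · exact absurd (E.time_lt_latestAck (hseen.resolve_left hsgen)) hBs.not_gt

lemma sum_advValue_unspent_lt {Q : Finset P.Ack → P.Tx → Prop} {E : P.Execution}
    (hE : P.AdvBounded E) (hn : PairwiseComparableBefore E n) (hA : P.latestAck E A < n)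
    (hin : InputClosed C) (hC : ∀ t ∈ C, CertifiedIn Q (P.pastA A) t) :
    ∑ o ∈ unspent C (P.pastA A), P.advValue o < P.M / 3 := by
  obtain ⟨m, hmn, hCm, hmA⟩ := exists_prefixAt_between hn hA hC
  let F : Set P.Tx := C ∪ {t | P.ConfirmedIn (P.prefixAt E m) t}
  have hFA : F ⊆ P.issued (P.pastA A) :=
    Set.union_subset (fun t ht => (hC t ht).mem_issued (isView_pastA A)) hmA
  have hFm : F ⊆ P.issued (P.prefixAt E m) :=
    Set.union_subset hCm fun t ht => ht.certifiedIn.mem_issued (isView_prefixAt E m)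
  have hFin : InputClosed F := hin.union (inputClosed_confirmedIn _)
  have hFconf : ConflictFree F := by
    refine conflictFree_of_certifiedIn (Q := fun B _ => P.latestAck E B < n) ?_
      fun B u B' u' hu hu' hB hB' => hn B u hu hB B' u' hu' hB'
    rintro t (ht | ht)
    · exact ⟨_, (hC t ht).imp fun B hB _ _ =>
        (latestAck_le_of_forall_mem_pastA E hB).trans_lt hA⟩
    · exact ⟨_, ht.certifiedIn.imp fun B hB _ _ => (Finset.sup_le hB).trans_lt hmn⟩
  calc ∑ o ∈ unspent C (P.pastA A), P.advValue o
      ≤ ∑ o ∈ utxo F, P.advValue o :=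
        Finset.sum_le_sum_of_subset_of_nonneg (unspent_subset_utxo Set.subset_union_left hFA)
          fun o _ _ => advValue_nonneg o
    _ ≤ P.advStake (P.prefixAt E m) :=
        sum_advValue_utxo_le_advStake hFin hFconf (fun _ ht => .inr ht) hFm
    _ < P.M / 3 := hE m

section Comparability

variable {E : P.Execution} {A₁ A₂ : Finset P.Ack} {C₁ C₂ : Set P.Tx} {t₁ t₂ : P.Tx}

lemma conflictFree_union_of_backs (hn : PairwiseComparableBefore E n)
    {Q : Finset P.Ack → P.Tx → Prop} (h₁ : P.latestAck E A₁ < n) (h₂ : P.latestAck E A₂ ≤ n)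
    (hC₁ : Backs Q A₁ C₁) (hC₂ : Backs (ComparableBefore E n) A₂ C₂) :
    ConflictFree (C₁ ∪ C₂) := by
  refine conflictFree_of_certifiedIn
    (Q := fun B u => P.latestAck E B ≤ n ∧ ComparableBefore E n B u) ?_ ?_
  · rintro t (ht | ht)
    · refine ⟨_, (hC₁.certified t ht).imp fun B hB htB _ => ?_⟩
      have hBn := (latestAck_le_of_forall_mem_pastA E hB).trans_lt h₁
      exact ⟨hBn.le, hn B t htB hBn⟩
    · exact ⟨_, (hC₂.certified t ht).imp fun B hB _ hcomp =>
        ⟨(latestAck_le_of_forall_mem_pastA E hB).trans h₂, hcomp⟩⟩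
  · rintro B u B' u' hu hu' ⟨hB, hcomp⟩ ⟨hB', hcomp'⟩
    obtain hlt | heq := hB.lt_or_eq
    · exact (hcomp' B u hu hlt).symm
    obtain hlt' | heq' := hB'.lt_or_eq
    · exact hcomp B' u' hu' hlt'
    · exact hu.comparable_of_latestAck_eq E hu' (heq.trans heq'.symm)

variable (hchain : P.HonestChained) (hE : P.AdvBounded E)

include hchain hE

section Step

variable (hn : PairwiseComparableBefore E n)

include hn

/-- If neither certificate had seen the transaction of the other, both would have seen all of
`C₁ ∪ C₂`, so that the two quorums would share an honest signer. -/
lemma comparable_of_backs (h₁ : P.ConfirmsVia A₁ t₁) (hA₁ : P.latestAck E A₁ < n)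
    (h₂ : P.ConfirmsVia A₂ t₂) (hA₂ : P.latestAck E A₂ ≤ n)
    (hC₁ : Backs (fun B u => Comparable B u A₂ t₂) A₁ C₁)
    (hC₂ : Backs (ComparableBefore E n) A₂ C₂) : Comparable A₁ t₁ A₂ t₂ := by
  by_contra hcomp
  obtain ⟨hunseen₁, hunseen₂⟩ := not_or.1 hcomp
  have hC₂' : Backs (fun B u => Comparable B u A₁ t₁) A₂ C₂ :=
    hC₂.imp fun _ _ _ _ hB => hB A₁ t₁ h₁ hA₁
  have hseen₁ : C₁ ∪ C₂ ⊆ P.issued (P.pastA A₁) := Set.union_subset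
    (fun t ht => (hC₁.certified t ht).mem_issued (isView_pastA A₁))
    (fun t ht => (hC₂'.certified t ht).mem_issued_of_comparable hunseen₁)
  have hseen₂ : C₁ ∪ C₂ ⊆ P.issued (P.pastA A₂) := Set.union_subset
    (fun t ht => (hC₁.certified t ht).mem_issued_of_comparable hunseen₂)
    (fun t ht => (hC₂.certified t ht).mem_issued (isView_pastA A₂))
  have hadv := sum_advValue_unspent_lt hE hn hA₁ hC₁.inputClosed hC₁.certified
  have hsigner := exists_honest_mem_inter (hC₁.inputClosed.union hC₂.inputClosed)
    (conflictFree_union_of_backs hn hA₁ hA₂ hC₁ hC₂) hseen₁ hseen₂ hC₁.stake_gt hC₂.stake_gt hadv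
  exact hcomp (h₁.comparable_of_honest_signer hchain h₂ hsigner)

lemma comparableBefore_of_backs (h₂ : P.ConfirmsVia A₂ t₂) (hA₂ : P.latestAck E A₂ ≤ n)
    (hC₂ : Backs (ComparableBefore E n) A₂ C₂) : ComparableBefore E n A₂ t₂ := by
  intro A₁ t₁ h₁ hA₁
  refine (h₁.induction (Q := fun A t => P.latestAck E A < n → Comparable A t A₂ t₂)
    (fun A C t hA hC hAn => ?_) hA₁).symm
  exact comparable_of_backs hchain hE hn hA hAn h₂ hA₂
    (hC.imp fun B u hB _ hcomp => hcomp ((latestAck_le_of_forall_mem_pastA E hB).trans_lt hAn)) hC₂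

lemma ConfirmsVia.comparableBefore (h : P.ConfirmsVia A t) (hA : P.latestAck E A ≤ n) :
    ComparableBefore E n A t := by
  refine h.induction (Q := fun A t => P.latestAck E A ≤ n → ComparableBefore E n A t)
    (fun A C t hA hC hAn => ?_) hA
  exact comparableBefore_of_backs hchain hE hn hA hAn
    (hC.imp fun B u hB _ hcomp => hcomp ((latestAck_le_of_forall_mem_pastA E hB).trans hAn))

end Step

lemma pairwiseComparableBefore (n : ℕ) : PairwiseComparableBefore E n := by
  induction n with
  | zero => exact fun A t _ hA => absurd hA (Nat.not_lt_zero _)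
  | succ n hn =>
    intro A t h hA A' t' h' hA'
    obtain hlt | heq := (Nat.lt_succ_iff.1 hA).lt_or_eq
    · exact (h'.comparableBefore hchain hE hn (Nat.lt_succ_iff.1 hA') A t h hlt).symm
    obtain hlt' | heq' := (Nat.lt_succ_iff.1 hA').lt_or_eq
    · exact h.comparableBefore hchain hE hn heq.le A' t' h' hlt'
    · exact h.comparable_of_latestAck_eq E h' (heq.trans heq'.symm)

lemma ConfirmsVia.comparable (h : P.ConfirmsVia A t) (h' : P.ConfirmsVia A' t') :
    Comparable A t A' t' :=
  pairwiseComparableBefore hchain hE (max (P.latestAck E A) (P.latestAck E A') + 1) A t h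
    (Nat.lt_succ_of_le (le_max_left _ _)) A' t' h' (Nat.lt_succ_of_le (le_max_right _ _))

lemma conflictFree_confirmed : ConflictFree {t | P.Confirmed t} :=
  conflictFree_of_certifiedIn (fun _ ht => ⟨_, ht.certifiedIn⟩)
    fun _ _ _ _ h h' _ _ => h.comparable hchain hE h'

end Comparability

theorem no_conflicting_confirmed_general (P : ABC) (hchain : P.HonestChained)
    (hadv : ∃ E : P.Execution, P.AdvBounded E) :
    ∀ t₁ t₂ : P.Tx, P.Confirmed t₁ → P.Confirmed t₂ → ¬ P.Conflict t₁ t₂ := by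
  rintro t₁ t₂ h₁ h₂ ⟨u₁, u₂, hdep₁, hdep₂, hne, hshare⟩
  obtain ⟨E, hE⟩ := hadv
  have hu₁ : P.Confirmed u₁ := ConfirmedIn.of_depends h₁ hdep₁
  have hu₂ : P.Confirmed u₂ := ConfirmedIn.of_depends h₂ hdep₂
  exact conflictFree_confirmed hchain hE hu₁ hu₂ hne hshare

end ABC

/-- STATEMENT 8 (Theorem 1 of the paper): no transaction DAG can be produced
by the ABC protocol in which a pair of confirmed transactions conflict; that
is, in any DAG in which honest validators chain their acks and never sign
conflicting transactions, and in which (for some execution producing the DAG)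
at all times less than one-third of the total money `M` is delegated to the
adversary, it is impossible that two conflicting transactions are both
confirmed. -/
theorem ABC.no_conflicting_confirmed (P : ABC)
    (hchain : P.HonestChained) (hnocs : P.HonestNoConflictSign)
    (hadv : ∃ E : P.Execution, P.AdvBounded E) :
    ∀ t₁ t₂ : P.Tx, P.Confirmed t₁ → P.Confirmed t₂ → ¬ P.Conflict t₁ t₂ :=
  P.no_conflicting_confirmed_general hchain hadv
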